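/- Let ε > 0 and let C ⊆ D be a bi-sided cylinder of length n (fixing the sequence coordinates a_k for −n ≤ k ≤ n) such that | f(α̂) − f_C | ≤ ε/2 for every α̂ ∈ C, where f_C = sup_{α̂ ∈ C} f(α̂). Then there exists R_0 > 0 such that for every R ≥ R_0, setting T = ln R − f_C, the set U = { α̂ ∈ C : n_R(α̂) ≠ r(α̂, T) } satisfies μ2(U ∩ C) ≤ 7ε·μ2(C). -/

import Mathlib

open MeasureTheory Filter Set Topology

noncomputable section

/-- The Gauss map `x ↦ {1/x}`. -/
def gaussMap (x : ℝ) : ℝ := Int.fract (1 / x)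

/-- The `n`-th partial quotient (1-indexed) of the continued fraction expansion of `α`:
`pq α n = ⌊1 / 𝒢^{n-1} α⌋`. -/
def pq (α : ℝ) (n : ℕ) : ℕ := ⌊1 / gaussMap^[n - 1] α⌋₊

/-- Denominators of the convergents attached to a (1-indexed) sequence of partial quotients:
`q 0 = 1`, `q 1 = b 1`, `q (n+2) = b (n+2) * q (n+1) + q n`. -/
def qden (b : ℕ → ℕ) : ℕ → ℕ
  | 0 => 1
  | 1 => b 1
  | n + 2 => b (n + 2) * qden b (n + 1) + qden b n

/-- Numerators of the convergents attached to a (1-indexed) sequence of partial quotients: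
`p 0 = 0`, `p 1 = 1`, `p (n+2) = b (n+2) * p (n+1) + p n`. -/
def pnum (b : ℕ → ℕ) : ℕ → ℕ
  | 0 => 0
  | 1 => 1
  | n + 2 => b (n + 2) * pnum b (n + 1) + pnum b n

/-- `n_R(α)`: the first index `n` with `q_n(α) > R`. -/
def nIndex (α : ℝ) (R : ℝ) : ℕ := sInf {n : ℕ | R < (qden (pq α) n : ℝ)}

/-- The Gauss measure on `(0,1)`, with density `1 / (ln 2 · (1 + x))`. -/
def gaussMeasure : Measure ℝ :=
  (volume.restrict (Ioo (0 : ℝ) 1)).withDensity fun x =>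
    ENNReal.ofReal (1 / (Real.log 2 * (1 + x)))

/-- The domain `D = ((0,1) ∖ ℚ) × ((0,1) ∖ ℚ)` of the natural extension of the Gauss map. -/
def Dset : Set (ℝ × ℝ) :=
  {p | p.1 ∈ Ioo (0 : ℝ) 1 ∧ Irrational p.1 ∧ p.2 ∈ Ioo (0 : ℝ) 1 ∧ Irrational p.2}

/-- The invariant measure `μ₂` on `D`, with density `1 / (ln 2 · (1 + x y)²)`. -/
def mu2 : Measure (ℝ × ℝ) :=
  (volume.restrict Dset).withDensity fun p =>
    ENNReal.ofReal (1 / (Real.log 2 * (1 + p.1 * p.2) ^ 2))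

/-- The roof function `φ(x, y) = ln (⌊1/y⌋ + x)`. -/
def roof (p : ℝ × ℝ) : ℝ := Real.log ((⌊1 / p.2⌋ : ℝ) + p.1)

/-- The natural extension of the Gauss map,
`Ĝ(x, y) = (1 / (⌊1/y⌋ + x), 1/y − ⌊1/y⌋)`. -/
def GhatMap (p : ℝ × ℝ) : ℝ × ℝ := (1 / ((⌊1 / p.2⌋ : ℝ) + p.1), Int.fract (1 / p.2))

/-- Birkhoff sums `S_r φ(p) = ∑_{i<r} φ(Ĝ^i p)` of the roof function under `Ĝ`. -/
def birk (p : ℝ × ℝ) (r : ℕ) : ℝ := ∑ i ∈ Finset.range r, roof (GhatMap^[i] p)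

/-- `r(p, T)`: the first `r` with `S_r φ(p) > T`. -/
def rTime (p : ℝ × ℝ) (T : ℝ) : ℕ := sInf {r : ℕ | T < birk p r}

/-- Value of a finite continued fraction `[b₁, b₂, …, bₘ] = 1/(b₁ + 1/(b₂ + ⋯ + 1/bₘ))`,
entries given as a list. -/
def cfList : List ℝ → ℝ
  | [] => 0
  | b :: t => 1 / (b + cfList t)

/-- The `m`-th truncation `[b 1, b 2, …, b m]` of an infinite continued fraction. -/
def cfTrunc (b : ℕ → ℝ) (m : ℕ) : ℝ := cfList ((List.range m).map fun i => b (i + 1))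

/-- Value of the infinite continued fraction `[b 1, b 2, …]`, i.e. the limit of its finite
truncations. -/
def cfVal (b : ℕ → ℝ) : ℝ := limUnder atTop fun m => cfTrunc b m

/-- The finite continued fraction on the reversed word,
`cfRev b k = [b k; b (k-1), …, b 1] = b k + 1/(b (k-1) + ⋯ + 1/(b 1))`. -/
def cfRev (b : ℕ → ℝ) (k : ℕ) : ℝ :=
  b k + cfList ((List.range (k - 1)).map fun i => b (k - 1 - i))

/-- For a bi-infinite sequence `a : ℤ → ℕ` of partial quotients,
`fn a n = ln q_n − ∑_{k=1}^n ln [a_k; a_{k-1}, a_{k-2}, …]`. -/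
def fn (a : ℤ → ℕ) (n : ℕ) : ℝ :=
  Real.log (qden (fun k => a (k : ℤ)) n : ℝ) -
    ∑ k ∈ Finset.Icc 1 n,
      Real.log ((a (k : ℤ) : ℝ) + cfVal fun j => (a ((k : ℤ) - (j : ℤ)) : ℝ))

/-- The bi-sided cylinder of length `n` in `D` prescribing the sequence coordinates
`a_k = b k` for `−n ≤ k ≤ n` (where `a_k`, `k ≥ 1`, are the partial quotients of the second
coordinate and `a_{−j}`, `j ≥ 0`, are the partial quotients of the first coordinate). -/
def cylinder (n : ℕ) (b : ℤ → ℕ) : Set (ℝ × ℝ) :=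
  {p ∈ Dset | (∀ k : ℕ, 1 ≤ k → k ≤ n → pq p.2 k = b (k : ℤ)) ∧
    ∀ j : ℕ, j ≤ n → pq p.1 (j + 1) = b (-(j : ℤ))}

/-- The phase space of the special flow over `Ĝ` with roof function `φ`. -/
def DPhi : Set ((ℝ × ℝ) × ℝ) := {q | q.1 ∈ Dset ∧ 0 ≤ q.2 ∧ q.2 < roof q.1}

/-- The invariant probability measure `μ₃` of the special flow. -/
def mu3 : Measure ((ℝ × ℝ) × ℝ) :=
  (ENNReal.ofReal (∫ p, roof p ∂mu2))⁻¹ • ((mu2.prod volume).restrict DPhi)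

/-- The special flow `Φ_t` (for `t ≥ 0`) built over `Ĝ` with roof function `φ`:
`Φ_t(p, s) = (Ĝ^{r-1} p, s + t − S_{r-1} φ(p))` where `r = r(p, s + t)`. -/
def flowMap (t : ℝ) (q : (ℝ × ℝ) × ℝ) : (ℝ × ℝ) × ℝ :=
  (GhatMap^[rTime q.1 (q.2 + t) - 1] q.1,
    q.2 + t - birk q.1 (rTime q.1 (q.2 + t) - 1))

end

/-!
For `p = (x, y)` the Birkhoff sum telescopes to `S_n φ p = ln (q_n + x p_n)`. Hence
`f p = -ln (1 + x y)`, and the error `|f_n p - f p|` is at most `1 / q_n²`. So `n_R` and `r(·, T)`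
are first passage times of two sequences which, once a threshold has been passed, agree up to
`3ε/4` after shifting by `f_C`; if the two times differ, some denominator `q_m` lies in the window
`[e^(-3ε/4) R, e^(3ε/4) R]`. Then `y` is within `1/q²` of a fraction `r/q` with `q` in that window.
Counting fractions, such `y` occupy in the limit at most a proportion `2 (e^(3ε/2) - 1)` of any
interval. Finally, the density of `μ₂` is `e^(2f) / ln 2`, which varies at most by the factor
`e^(2ε)` on `C`.
-/

/-! ### The Gauss map and convergents -/

/-- The irrational points of the unit interval; `D` is the square of this set. -/
def unitIrrationals : Set ℝ := Ioo 0 1 \ range ((↑) : ℚ → ℝ)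

lemma Dset_eq_prod : Dset = unitIrrationals ×ˢ unitIrrationals := by
  ext p
  simp only [Dset, unitIrrationals, Irrational, mem_ofPred_eq, mem_prod, Set.mem_sdiff, and_assoc]

lemma natFloor_add_gaussMap {y : ℝ} (hy : 0 ≤ y) : (⌊1 / y⌋₊ : ℝ) + gaussMap y = 1 / y := by
  rw [natCast_floor_eq_intCast_floor (by positivity), gaussMap, Int.floor_add_fract]

lemma one_lt_one_div_of_mem {y : ℝ} (hy : y ∈ unitIrrationals) : 1 < 1 / y :=
  one_lt_one_div hy.1.1 hy.1.2

lemma gaussMap_mem {y : ℝ} (hy : y ∈ unitIrrationals) : gaussMap y ∈ unitIrrationals := by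
  have hirr : Irrational (gaussMap y) := by
    have hinv : Irrational (1 / y) := by simpa only [one_div] using Irrational.inv hy.2
    exact hinv.sub_intCast _
  exact ⟨⟨(Int.fract_nonneg _).lt_of_ne' hirr.ne_zero, Int.fract_lt_one _⟩, hirr⟩

lemma iterate_gaussMap_mem {y : ℝ} (hy : y ∈ unitIrrationals) (k : ℕ) :
    gaussMap^[k] y ∈ unitIrrationals :=
  (show MapsTo gaussMap unitIrrationals unitIrrationals from fun _ => gaussMap_mem).iterate k hy

lemma pq_pos {y : ℝ} (hy : y ∈ unitIrrationals) (k : ℕ) : 0 < pq y k :=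
  Nat.floor_pos.2 (one_lt_one_div_of_mem (iterate_gaussMap_mem hy (k - 1))).le

lemma pq_add_iterate_gaussMap {y : ℝ} (hy : y ∈ unitIrrationals) (k : ℕ) :
    (pq y (k + 1) : ℝ) + gaussMap^[k + 1] y = 1 / gaussMap^[k] y := by
  rw [Function.iterate_succ_apply']
  exact natFloor_add_gaussMap (iterate_gaussMap_mem hy k).1.1.le

lemma qden_pos {b : ℕ → ℕ} (hb : ∀ k, 0 < b (k + 1)) (n : ℕ) : 0 < qden b n := by
  induction n using Nat.twoStepInduction with
  | zero => exact one_pos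
  | one => exact hb 0
  | more n h₀ _ => exact Nat.add_pos_right _ h₀

lemma le_qden {b : ℕ → ℕ} (hb : ∀ k, 0 < b (k + 1)) (n : ℕ) : n ≤ qden b n := by
  induction n using Nat.twoStepInduction with
  | zero => exact Nat.zero_le _
  | one => exact hb 0
  | more n _ h₁ =>
    have hmul : qden b (n + 1) ≤ b (n + 2) * qden b (n + 1) := Nat.le_mul_of_pos_left _ (hb _)
    have hpos := qden_pos hb n
    rw [qden]
    lia

lemma pnum_le_qden {b : ℕ → ℕ} (hb : 0 < b 1) (n : ℕ) : pnum b n ≤ qden b n := by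
  induction n using Nat.twoStepInduction with
  | zero => exact Nat.zero_le _
  | one => exact hb
  | more n h₀ h₁ => exact Nat.add_le_add (Nat.mul_le_mul_left _ h₁) h₀

lemma abs_pnum_mul_qden_sub (b : ℕ → ℕ) (n : ℕ) :
    |(pnum b (n + 1) : ℝ) * qden b n - pnum b n * qden b (n + 1)| = 1 := by
  induction n with
  | zero => simp [pnum, qden]
  | succ n ih =>
    rw [← ih, ← abs_neg, qden, pnum]
    push_cast
    congr 1
    ring

section Convergents

variable {y : ℝ} (hy : y ∈ unitIrrationals) (n : ℕ)
include hy

lemma qden_pq_pos : (0 : ℝ) < qden (pq y) n :=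
  Nat.cast_pos.2 (qden_pos (fun k => pq_pos hy (k + 1)) n)

lemma pnum_div_qden_pq_mem_Icc : (pnum (pq y) n : ℝ) / qden (pq y) n ∈ Icc (0 : ℝ) 1 :=
  ⟨by positivity, (div_le_one (qden_pq_pos hy n)).2 (Nat.cast_le.2 (pnum_le_qden (pq_pos hy 1) n))⟩

lemma mul_qden_add_iterate_gaussMap_mul_qden :
    y * (qden (pq y) (n + 1) + gaussMap^[n + 1] y * qden (pq y) n) =
      pnum (pq y) (n + 1) + gaussMap^[n + 1] y * pnum (pq y) n := by
  induction n with
  | zero =>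
    have hpq := pq_add_iterate_gaussMap hy 0
    have hy₀ := hy.1.1.ne'
    simp only [zero_add, Function.iterate_zero, id_eq] at hpq
    simp only [qden, pnum, zero_add, Nat.cast_one, Nat.cast_zero, mul_one, mul_zero, add_zero, hpq]
    exact mul_one_div_cancel hy₀
  | succ n ih =>
    have hz := (iterate_gaussMap_mem hy (n + 1)).1.1.ne'
    have hw := eq_sub_of_add_eq' (pq_add_iterate_gaussMap hy (n + 1))
    rw [qden, pnum, hw]
    push_cast
    field_simp
    linear_combination ih

lemma abs_sub_pnum_div_qden_le :
    |y - pnum (pq y) n / qden (pq y) n| ≤ 1 / (qden (pq y) n : ℝ) ^ 2 := by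
  cases n with
  | zero => simpa [qden, pnum, abs_of_pos hy.1.1] using hy.1.2.le
  | succ n =>
    have hmoebius := mul_qden_add_iterate_gaussMap_mul_qden hy n
    have hdet := abs_pnum_mul_qden_sub (pq y) n
    have hq := qden_pq_pos hy (n + 1)
    have hq' := qden_pq_pos hy n
    obtain ⟨hz₀, hz₁⟩ := (iterate_gaussMap_mem hy (n + 1)).1
    set z := gaussMap^[n + 1] y
    set q := (qden (pq y) (n + 1) : ℝ)
    set q' := (qden (pq y) n : ℝ)
    set r := (pnum (pq y) (n + 1) : ℝ)
    set r' := (pnum (pq y) n : ℝ)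
    have hsub : y - r / q = -(z * (r * q' - r' * q)) / (q * (q + z * q')) := by
      field_simp
      linear_combination q * hmoebius
    rw [hsub, abs_div, abs_neg, abs_mul, hdet, mul_one, abs_of_pos hz₀, abs_of_pos (by positivity),
      sq]
    gcongr
    exact le_add_of_nonneg_right (by positivity)

lemma tendsto_qden_pq_atTop : Tendsto (fun n => (qden (pq y) n : ℝ)) atTop atTop :=
  tendsto_natCast_atTop_atTop.comp <|
    tendsto_atTop_mono (le_qden fun k => pq_pos hy (k + 1)) tendsto_id

end Convergents

/-! ### Birkhoff sums of the roof function -/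

lemma iterate_GhatMap_snd (p : ℝ × ℝ) (n : ℕ) : (GhatMap^[n] p).2 = gaussMap^[n] p.2 :=
  (show Function.Semiconj Prod.snd GhatMap gaussMap from fun _ => rfl).iterate_right n p

section BirkhoffSums

variable {p : ℝ × ℝ} (hp : p ∈ Dset) (n : ℕ)
include hp

lemma snd_mem_of_mem_Dset : p.2 ∈ unitIrrationals :=
  (Dset_eq_prod ▸ hp : p ∈ unitIrrationals ×ˢ unitIrrationals).2

lemma floor_one_div_iterate_GhatMap_snd :
    (⌊1 / (GhatMap^[n] p).2⌋ : ℝ) = pq p.2 (n + 1) := by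
  rw [iterate_GhatMap_snd, ← natCast_floor_eq_intCast_floor]
  · rfl
  · exact one_div_nonneg.2 (iterate_gaussMap_mem (snd_mem_of_mem_Dset hp) n).1.1.le

lemma qden_add_mul_pnum_pos : 0 < (qden (pq p.2) n : ℝ) + p.1 * pnum (pq p.2) n :=
  add_pos_of_pos_of_nonneg (qden_pq_pos (snd_mem_of_mem_Dset hp) n)
    (mul_nonneg hp.1.1.le (Nat.cast_nonneg _))

lemma pq_add_iterate_GhatMap_fst :
    (pq p.2 (n + 1) : ℝ) + (GhatMap^[n] p).1 =
      (qden (pq p.2) (n + 1) + p.1 * pnum (pq p.2) (n + 1)) /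
        (qden (pq p.2) n + p.1 * pnum (pq p.2) n) := by
  induction n with
  | zero => simp [qden, pnum]
  | succ n ih =>
    have hfst : (GhatMap^[n + 1] p).1 = 1 / ((pq p.2 (n + 1) : ℝ) + (GhatMap^[n] p).1) := by
      rw [Function.iterate_succ_apply', ← floor_one_div_iterate_GhatMap_snd hp]
      rfl
    have hn := (qden_add_mul_pnum_pos hp (n + 1)).ne'
    rw [hfst, ih, one_div_div, eq_div_iff hn, add_mul, div_mul_cancel₀ _ hn, qden.eq_3, pnum.eq_3]
    push_cast
    ring

lemma birk_eq_log : birk p n = Real.log (qden (pq p.2) n + p.1 * pnum (pq p.2) n) := by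
  induction n with
  | zero => simp [birk, qden, pnum]
  | succ n ih =>
    have hsucc : birk p (n + 1) = birk p n + roof (GhatMap^[n] p) := Finset.sum_range_succ _ _
    rw [hsucc, ih, roof, floor_one_div_iterate_GhatMap_snd hp, pq_add_iterate_GhatMap_fst hp,
      Real.log_div (qden_add_mul_pnum_pos hp _).ne' (qden_add_mul_pnum_pos hp _).ne',
      add_sub_cancel]

lemma birk_eq_log_qden_add :
    birk p n = Real.log (qden (pq p.2) n) +
      Real.log (1 + p.1 * (pnum (pq p.2) n / qden (pq p.2) n)) := by
  have hq := qden_pq_pos (snd_mem_of_mem_Dset hp) n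
  have hx := hp.1.1
  rw [birk_eq_log hp, ← Real.log_mul hq.ne' (by positivity)]
  congr 1
  field_simp

lemma log_qden_le_birk : Real.log (qden (pq p.2) n) ≤ birk p n := by
  have hx := hp.1.1
  rw [birk_eq_log_qden_add hp]
  exact le_add_of_nonneg_right (Real.log_nonneg (le_add_of_nonneg_right (by positivity)))

lemma birk_le_log_qden_add_log_two : birk p n ≤ Real.log (qden (pq p.2) n) + Real.log 2 := by
  obtain ⟨hr₀, hr₁⟩ := pnum_div_qden_pq_mem_Icc (snd_mem_of_mem_Dset hp) n
  have hmul := mul_le_one₀ hp.1.2.le hr₀ hr₁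
  have hx := hp.1.1
  rw [birk_eq_log_qden_add hp]
  gcongr
  linarith

end BirkhoffSums

lemma abs_log_sub_log_le {a b : ℝ} (ha : 1 ≤ a) (hb : 1 ≤ b) :
    |Real.log a - Real.log b| ≤ |a - b| := by
  wlog hba : b ≤ a generalizing a b
  · rw [abs_sub_comm, abs_sub_comm a]
    exact this hb ha (le_of_not_ge hba)
  have hb₀ : 0 < b := by linarith
  rw [abs_of_nonneg (sub_nonneg.2 (Real.log_le_log hb₀ hba)), abs_of_nonneg (sub_nonneg.2 hba)]
  calc Real.log a - Real.log b = Real.log (a / b) := (Real.log_div (by positivity) hb₀.ne').symm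
    _ ≤ a / b - 1 := Real.log_le_sub_one_of_pos (by positivity)
    _ = (a - b) / b := by rw [sub_div, div_self hb₀.ne']
    _ ≤ a - b := div_le_self (sub_nonneg.2 hba) hb

lemma abs_log_qden_sub_birk_add_log_le {p : ℝ × ℝ} (hp : p ∈ Dset) (n : ℕ) :
    |Real.log (qden (pq p.2) n) - birk p n + Real.log (1 + p.1 * p.2)| ≤
      1 / (qden (pq p.2) n : ℝ) ^ 2 := by
  have ⟨⟨hx₀, hx₁⟩, _, ⟨hy₀, _⟩, _⟩ := hp
  have hr := (pnum_div_qden_pq_mem_Icc (snd_mem_of_mem_Dset hp) n).1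
  rw [birk_eq_log_qden_add hp]
  set r : ℝ := pnum (pq p.2) n / qden (pq p.2) n
  calc _ = |Real.log (1 + p.1 * p.2) - Real.log (1 + p.1 * r)| := by congr 1; ring
    _ ≤ |(1 + p.1 * p.2) - (1 + p.1 * r)| :=
      abs_log_sub_log_le (le_add_of_nonneg_right (by positivity))
        (le_add_of_nonneg_right (by positivity))
    _ = p.1 * |p.2 - r| := by rw [add_sub_add_left_eq_sub, ← mul_sub, abs_mul, abs_of_pos hx₀]
    _ ≤ |p.2 - r| := mul_le_of_le_one_left (abs_nonneg _) hx₁.le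
    _ ≤ _ := abs_sub_pnum_div_qden_le (snd_mem_of_mem_Dset hp) n

lemma tendsto_log_qden_sub_birk {p : ℝ × ℝ} (hp : p ∈ Dset) :
    Tendsto (fun n => Real.log (qden (pq p.2) n : ℝ) - birk p n) atTop
      (𝓝 (-Real.log (1 + p.1 * p.2))) := by
  rw [tendsto_iff_norm_sub_tendsto_zero]
  simp only [sub_neg_eq_add, Real.norm_eq_abs]
  refine squeeze_zero (fun _ => abs_nonneg _) (abs_log_qden_sub_birk_add_log_le hp) ?_
  simp only [one_div]
  exact ((tendsto_pow_atTop two_ne_zero).comp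
    (tendsto_qden_pq_atTop (snd_mem_of_mem_Dset hp))).inv_tendsto_atTop

/-! ### Disagreement of the two first passage times -/

lemma exists_abs_sub_le_of_sInf_ne {u v : ℕ → ℝ} {L T η : ℝ} (hu : ∃ n, L < u n)
    (hv : ∃ n, T < v n) (h : ∀ n, L < u n ∨ T < v n → |(u n - L) - (v n - T)| ≤ η)
    (hne : sInf {n | L < u n} ≠ sInf {n | T < v n}) : ∃ m, |u m - L| ≤ η := by
  rcases lt_or_gt_of_ne hne with hlt | hlt
  · refine ⟨sInf {n | L < u n}, ?_⟩
    have hum : L < u (sInf {n | L < u n}) := Nat.sInf_mem hu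
    have hvm : ¬T < v (sInf {n | L < u n}) := Nat.notMem_of_lt_sInf hlt
    have hclose := abs_le.1 (h _ (.inl hum))
    rw [abs_le]
    constructor <;> linarith
  · refine ⟨sInf {n | T < v n}, ?_⟩
    have hvm : T < v (sInf {n | T < v n}) := Nat.sInf_mem hv
    have hum : ¬L < u (sInf {n | T < v n}) := Nat.notMem_of_lt_sInf hlt
    have hclose := abs_le.1 (h _ (.inr hvm))
    rw [abs_le]
    constructor <;> linarith

lemma nIndex_eq_sInf_log {y R : ℝ} (hy : y ∈ unitIrrationals) (hR : 0 < R) :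
    nIndex y R = sInf {n | Real.log R < Real.log (qden (pq y) n)} := by
  simp only [nIndex, Real.log_lt_log_iff hR (qden_pq_pos hy _)]

lemma one_div_qden_sq_le_of_passed {p : ℝ × ℝ} (hp : p ∈ Dset) {c ε R : ℝ} (hR : 0 < R)
    (hRε : 16 * Real.exp ε ≤ ε * R ^ 2) (hc : |Real.log (1 + p.1 * p.2) + c| ≤ ε / 2) {n : ℕ}
    (hn : Real.log R < Real.log (qden (pq p.2) n) ∨ Real.log R - c < birk p n) :
    1 / (qden (pq p.2) n : ℝ) ^ 2 ≤ ε / 4 := by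
  have hq := qden_pq_pos (snd_mem_of_mem_Dset hp) n
  have hlog : Real.log R ≤ Real.log (2 * Real.exp (ε / 2) * qden (pq p.2) n) := by
    rw [Real.log_mul (by positivity) hq.ne', Real.log_mul two_ne_zero (Real.exp_ne_zero _),
      Real.log_exp]
    have hbirk := birk_le_log_qden_add_log_two hp n
    have hnonneg : 0 ≤ Real.log (1 + p.1 * p.2) :=
      Real.log_nonneg (le_add_of_nonneg_right (mul_nonneg hp.1.1.le hp.2.2.1.1.le))
    have hlog_two := Real.log_pos one_lt_two
    have hc₂ := (abs_le.1 hc).2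
    have hε := (abs_nonneg _).trans hc
    rcases hn with hn | hn <;> linarith
  have hRq : R ^ 2 ≤ 4 * Real.exp ε * (qden (pq p.2) n : ℝ) ^ 2 :=
    calc R ^ 2 ≤ (2 * Real.exp (ε / 2) * qden (pq p.2) n) ^ 2 := by
          gcongr
          exact (Real.log_le_log_iff hR (by positivity)).1 hlog
      _ = 4 * Real.exp ε * (qden (pq p.2) n : ℝ) ^ 2 := by
          rw [mul_pow, mul_pow, ← Real.exp_nat_mul]
          ring_nf
  have hε : 0 < ε := pos_of_mul_pos_left (hRε.trans_lt' (by positivity)) (sq_nonneg R)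
  have h4 : Real.exp ε * 4 ≤ Real.exp ε * (ε * (qden (pq p.2) n : ℝ) ^ 2) := by
    linarith [mul_le_mul_of_nonneg_left hRq hε.le]
  rw [div_le_div_iff₀ (by positivity) four_pos, one_mul]
  exact le_of_mul_le_mul_left h4 (Real.exp_pos ε)

lemma exists_abs_log_qden_sub_log_le {p : ℝ × ℝ} (hp : p ∈ Dset) {c ε R : ℝ} (hR : 0 < R)
    (hRε : 16 * Real.exp ε ≤ ε * R ^ 2) (hc : |Real.log (1 + p.1 * p.2) + c| ≤ ε / 2)
    (hne : nIndex p.2 R ≠ rTime p (Real.log R - c)) :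
    ∃ m, |Real.log (qden (pq p.2) m) - Real.log R| ≤ 3 / 4 * ε := by
  have hy := snd_mem_of_mem_Dset hp
  have hunbounded (L : ℝ) : ∃ n, L < Real.log (qden (pq p.2) n) :=
    ((Real.tendsto_log_atTop.comp (tendsto_qden_pq_atTop hy)).eventually_gt_atTop L).exists
  rw [nIndex_eq_sInf_log hy hR, rTime] at hne
  refine exists_abs_sub_le_of_sInf_ne (hunbounded _)
    ((hunbounded _).imp fun n hn => hn.trans_le (log_qden_le_birk hp n)) (fun n hn => ?_) hne
  have hsmall := one_div_qden_sq_le_of_passed hp hR hRε hc hn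
  have herror := abs_log_qden_sub_birk_add_log_le hp n
  rw [abs_le] at hc herror ⊢
  constructor <;> linarith

/-! ### Measure of the well approximable points -/

/-- The reals admitting a rational approximation `r / q` of quality `1 / q ^ 2` whose denominator
lies in the window `[A, B]`; the fraction need not be in lowest terms. -/
def approximable (A B : ℝ) : Set ℝ :=
  {y | ∃ q r : ℤ, (A ≤ q ∧ q ≤ B) ∧ |y - r / q| ≤ 1 / (q : ℝ) ^ 2}

lemma snd_mem_approximable {p : ℝ × ℝ} (hp : p ∈ Dset) {c ε R : ℝ} (hR : 0 < R)
    (hRε : 16 * Real.exp ε ≤ ε * R ^ 2) (hc : |Real.log (1 + p.1 * p.2) + c| ≤ ε / 2)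
    (hne : nIndex p.2 R ≠ rTime p (Real.log R - c)) :
    p.2 ∈ approximable (Real.exp (-(3 / 4 * ε)) * R) (Real.exp (3 / 4 * ε) * R) := by
  have hy := snd_mem_of_mem_Dset hp
  obtain ⟨m, hm⟩ := exists_abs_log_qden_sub_log_le hp hR hRε hc hne
  have hq := qden_pq_pos hy m
  obtain ⟨hm₁, hm₂⟩ := abs_le.1 hm
  refine ⟨qden (pq p.2) m, pnum (pq p.2) m, ?_,
    by simpa only [Int.cast_natCast] using abs_sub_pnum_div_qden_le hy m⟩
  rw [Int.cast_natCast, ← Real.log_le_log_iff (by positivity) hq,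
    ← Real.log_le_log_iff hq (by positivity), Real.log_mul (Real.exp_ne_zero _) hR.ne',
    Real.log_mul (Real.exp_ne_zero _) hR.ne', Real.log_exp, Real.log_exp]
  constructor <;> linarith

lemma card_Icc_ceil_floor_le {a b : ℝ} (hab : a ≤ b) :
    ((Finset.Icc ⌈a⌉ ⌊b⌋).card : ℝ) ≤ b - a + 1 := by
  rw [Int.card_Icc, ← Int.cast_natCast, Int.toNat_eq_max]
  push_cast
  exact max_le (by linarith [Int.floor_le b, Int.le_ceil a]) (by linarith)

lemma measure_biUnion_Icc_ceil_floor_le {X : Type*} [MeasurableSpace X] (μ : Measure X)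
    {s : ℤ → Set X} {a b M : ℝ} (hab : a ≤ b)
    (hs : ∀ i ∈ Finset.Icc ⌈a⌉ ⌊b⌋, μ (s i) ≤ ENNReal.ofReal M) :
    μ (⋃ i ∈ Finset.Icc ⌈a⌉ ⌊b⌋, s i) ≤ ENNReal.ofReal ((b - a + 1) * M) := by
  have hcard : ((Finset.Icc ⌈a⌉ ⌊b⌋).card : ENNReal) ≤ ENNReal.ofReal (b - a + 1) := by
    rw [← ENNReal.ofReal_natCast]
    exact ENNReal.ofReal_le_ofReal (card_Icc_ceil_floor_le hab)
  calc μ (⋃ i ∈ Finset.Icc ⌈a⌉ ⌊b⌋, s i) ≤ ∑ i ∈ Finset.Icc ⌈a⌉ ⌊b⌋, μ (s i) :=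
        measure_biUnion_finset_le _ _
    _ ≤ (Finset.Icc ⌈a⌉ ⌊b⌋).card • ENNReal.ofReal M := Finset.sum_le_card_nsmul _ _ _ hs
    _ ≤ ENNReal.ofReal (b - a + 1) * ENNReal.ofReal M := by rw [nsmul_eq_mul]; gcongr
    _ = ENNReal.ofReal ((b - a + 1) * M) := (ENNReal.ofReal_mul (by linarith)).symm

lemma volume_Icc_inter_near_fractions_le {α β δ q : ℝ} (hαβ : α ≤ β) (hδ : 0 ≤ δ) (hq : 0 < q) :
    volume {y ∈ Icc α β | ∃ r : ℤ, |y - r / q| ≤ δ} ≤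
      ENNReal.ofReal ((q * (β - α + 2 * δ) + 1) * (2 * δ)) := by
  have hsub : {y ∈ Icc α β | ∃ r : ℤ, |y - r / q| ≤ δ} ⊆
      ⋃ r ∈ Finset.Icc ⌈q * (α - δ)⌉ ⌊q * (β + δ)⌋, Metric.closedBall ((r : ℝ) / q) δ := by
    rintro y ⟨⟨hαy, hyβ⟩, r, hr⟩
    obtain ⟨hr₁, hr₂⟩ := abs_le.1 hr
    refine mem_biUnion (Finset.mem_coe.2 (Finset.mem_Icc.2
      ⟨Int.ceil_le.2 ?_, Int.le_floor.2 ?_⟩)) hr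
    · rw [← le_div_iff₀' hq]
      linarith
    · rw [← div_le_iff₀' hq]
      linarith
  refine (measure_mono hsub).trans ((measure_biUnion_Icc_ceil_floor_le volume (by gcongr; linarith)
    fun r _ => (Real.volume_closedBall _ _).le).trans_eq ?_)
  ring_nf

lemma volume_Icc_inter_approximable_le {α β A B : ℝ} (hαβ : α ≤ β) (hA : 1 ≤ A) (hAB : A ≤ B) :
    volume (Icc α β ∩ approximable A B) ≤
      ENNReal.ofReal ((B - A + 1) * ((2 * (β - α) + 6 / A) / A)) := by
  have hsub : Icc α β ∩ approximable A B ⊆ ⋃ q ∈ Finset.Icc ⌈A⌉ ⌊B⌋,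
      {y ∈ Icc α β | ∃ r : ℤ, |y - r / q| ≤ 1 / (q : ℝ) ^ 2} := by
    rintro y ⟨hy, q, r, ⟨hAq, hqB⟩, hr⟩
    exact mem_biUnion (Finset.mem_coe.2 (Finset.mem_Icc.2
      ⟨Int.ceil_le.2 hAq, Int.le_floor.2 hqB⟩)) ⟨hy, r, hr⟩
  refine (measure_mono hsub).trans (measure_biUnion_Icc_ceil_floor_le volume hAB fun q hq => ?_)
  have hAq : A ≤ q := Int.ceil_le.1 (Finset.mem_Icc.1 hq).1
  have hq₁ : (1 : ℝ) ≤ q := hA.trans hAq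
  have hq₀ : (0 : ℝ) < q := by linarith
  refine (volume_Icc_inter_near_fractions_le hαβ (by positivity) hq₀).trans
    (ENNReal.ofReal_le_ofReal ?_)
  calc (q * (β - α + 2 * (1 / (q : ℝ) ^ 2)) + 1) * (2 * (1 / (q : ℝ) ^ 2))
      = (2 * (β - α) + (4 / q + 2) / q) / q := by field_simp; ring
    _ ≤ (2 * (β - α) + (4 / 1 + 2) / A) / A := by gcongr
    _ = (2 * (β - α) + 6 / A) / A := by norm_num

lemma tendsto_window_volume_bound {a : ℝ} (ha : 0 < a) (b l : ℝ) :
    Tendsto (fun R => (b * R - a * R + 1) * ((2 * l + 6 / (a * R)) / (a * R))) atTop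
      (𝓝 (2 * (b / a - 1) * l)) := by
  have haR : Tendsto (fun R => a * R) atTop atTop := tendsto_id.const_mul_atTop ha
  have hlim : Tendsto (fun R => (b / a - 1 + 1 / (a * R)) * (2 * l + 6 / (a * R))) atTop
      (𝓝 ((b / a - 1 + 0) * (2 * l + 0))) :=
    ((haR.const_div_atTop 1).const_add _).mul ((haR.const_div_atTop 6).const_add _)
  rw [show (b / a - 1 + 0) * (2 * l + 0) = 2 * (b / a - 1) * l by ring] at hlim
  refine hlim.congr' ?_
  filter_upwards [eventually_gt_atTop 0] with R hR
  field_simp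

lemma exists_subset_Icc_ofReal_le_volume {I : Set ℝ} (hI : I.OrdConnected)
    (hbdd : Bornology.IsBounded I) :
    ∃ α β, α ≤ β ∧ I ⊆ Icc α β ∧ ENNReal.ofReal (β - α) ≤ volume I := by
  rcases I.eq_empty_or_nonempty with rfl | hne
  · exact ⟨0, 0, le_rfl, empty_subset _, by simp⟩
  have hconn : IsConnected I := ⟨hne, hI.isPreconnected⟩
  refine ⟨sInf I, sSup I, Real.sInf_le_sSup I hbdd.bddBelow hbdd.bddAbove,
    subset_Icc_csInf_csSup hbdd.bddBelow hbdd.bddAbove, ?_⟩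
  rw [← Real.volume_Ioo]
  exact measure_mono (hconn.Ioo_csInf_csSup_subset hbdd.bddBelow hbdd.bddAbove)

lemma eventually_volume_inter_approximable_le {I : Set ℝ} (hI : I.OrdConnected)
    (hbdd : Bornology.IsBounded I) {a b κ : ℝ} (ha : 0 < a) (hab : a ≤ b)
    (hκ : 2 * (b / a - 1) < κ) :
    ∀ᶠ R in atTop, volume (I ∩ approximable (a * R) (b * R)) ≤ ENNReal.ofReal κ * volume I := by
  obtain ⟨α, β, hαβ, hsub, hvol⟩ := exists_subset_Icc_ofReal_le_volume hI hbdd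
  rcases hαβ.eq_or_lt with rfl | hlt
  · rw [Icc_self] at hsub
    exact .of_forall fun R => ((measure_mono (inter_subset_left.trans hsub)).trans_eq
      Real.volume_singleton).trans zero_le
  have hκ₀ : 0 ≤ κ := by
    have := (one_le_div ha).2 hab
    linarith
  have hbound := (tendsto_window_volume_bound ha b (β - α)).eventually_lt_const
    (mul_lt_mul_of_pos_right hκ (sub_pos.2 hlt))
  have hone_le : ∀ᶠ R in atTop, 1 ≤ a * R :=
    (tendsto_id.const_mul_atTop ha).eventually_ge_atTop 1
  filter_upwards [hbound, eventually_ge_atTop 0, hone_le] with R hR hR₀ haR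
  calc volume (I ∩ approximable (a * R) (b * R))
      ≤ volume (Icc α β ∩ approximable (a * R) (b * R)) := by gcongr
    _ ≤ ENNReal.ofReal (κ * (β - α)) :=
        (volume_Icc_inter_approximable_le hαβ haR (mul_le_mul_of_nonneg_right hab hR₀)).trans
          (ENNReal.ofReal_le_ofReal hR.le)
    _ = ENNReal.ofReal κ * ENNReal.ofReal (β - α) := ENNReal.ofReal_mul hκ₀
    _ ≤ ENNReal.ofReal κ * volume I := by gcongr

/-! ### The invariant measure -/

lemma mu2_eq_setLIntegral {s : Set (ℝ × ℝ)} (hs : s ⊆ Dset) :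
    mu2 s = ∫⁻ p in s, ENNReal.ofReal (1 / (Real.log 2 * (1 + p.1 * p.2) ^ 2)) := by
  rw [mu2, withDensity_apply', Measure.restrict_restrict_of_subset hs]

lemma density_eq_exp {t : ℝ} (ht : 0 < t) :
    1 / (Real.log 2 * t ^ 2) = Real.exp (-(2 * Real.log t)) / Real.log 2 := by
  rw [Real.exp_neg, two_mul, Real.exp_add, Real.exp_log ht]
  field_simp

lemma mu2_le_of_volume_le {s t : Set (ℝ × ℝ)} (hst : s ⊆ t) (ht : t ⊆ Dset) {c δ κ : ℝ}
    (hlog : ∀ p ∈ t, |Real.log (1 + p.1 * p.2) + c| ≤ δ)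
    (hvol : volume s ≤ ENNReal.ofReal κ * volume t) :
    mu2 s ≤ ENNReal.ofReal (Real.exp (4 * δ) * κ) * mu2 t := by
  have hdensity (p) (hp : p ∈ t) :
      1 / (Real.log 2 * (1 + p.1 * p.2) ^ 2) ∈
        Icc (Real.exp (2 * c - 2 * δ) / Real.log 2) (Real.exp (2 * c + 2 * δ) / Real.log 2) := by
    obtain ⟨hlo, hhi⟩ := abs_le.1 (hlog p hp)
    have hpos := mul_pos (ht hp).1.1 (ht hp).2.2.1.1
    rw [density_eq_exp (by linarith)]
    constructor <;> gcongr <;> linarith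
  have hupper : mu2 s ≤ ENNReal.ofReal (Real.exp (2 * c + 2 * δ) / Real.log 2) * volume s := by
    rw [mu2_eq_setLIntegral (hst.trans ht), ← setLIntegral_const]
    exact setLIntegral_mono measurable_const fun p hp =>
      ENNReal.ofReal_le_ofReal (hdensity p (hst hp)).2
  have hlower : ENNReal.ofReal (Real.exp (2 * c - 2 * δ) / Real.log 2) * volume t ≤ mu2 t := by
    rw [mu2_eq_setLIntegral ht, ← setLIntegral_const]
    exact setLIntegral_mono (by fun_prop) fun p hp => ENNReal.ofReal_le_ofReal (hdensity p hp).1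
  have hratio : Real.exp (2 * c + 2 * δ) / Real.log 2 =
      Real.exp (4 * δ) * (Real.exp (2 * c - 2 * δ) / Real.log 2) := by
    rw [← mul_div_assoc, ← Real.exp_add]
    ring_nf
  calc mu2 s ≤ ENNReal.ofReal (Real.exp (2 * c + 2 * δ) / Real.log 2) * volume s := hupper
    _ ≤ ENNReal.ofReal (Real.exp (2 * c + 2 * δ) / Real.log 2) *
        (ENNReal.ofReal κ * volume t) := by gcongr
    _ = ENNReal.ofReal (Real.exp (4 * δ) * κ) *
        (ENNReal.ofReal (Real.exp (2 * c - 2 * δ) / Real.log 2) * volume t) := by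
      rw [hratio, ENNReal.ofReal_mul (by positivity), ENNReal.ofReal_mul (by positivity)]
      ring
    _ ≤ ENNReal.ofReal (Real.exp (4 * δ) * κ) * mu2 t := by gcongr

lemma volume_Dset_inter_prod (J K : Set ℝ) :
    volume (Dset ∩ J ×ˢ K) = volume (J ∩ Ioo 0 1) * volume (K ∩ Ioo 0 1) := by
  have hnull (S : Set ℝ) : volume (unitIrrationals ∩ S) = volume (S ∩ Ioo 0 1) := by
    rw [unitIrrationals, sdiff_inter_right_comm, inter_comm,
      measure_sdiff_null ((countable_range _).measure_zero _)]
  rw [Dset_eq_prod, prod_inter_prod, Measure.volume_eq_prod, Measure.prod_prod, hnull, hnull]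

/-! ### Cylinders -/

lemma pq_add_two (y : ℝ) (k : ℕ) : pq y (k + 2) = pq (gaussMap y) (k + 1) := by
  simp only [pq, Nat.add_sub_cancel, Nat.add_succ_sub_one, Function.iterate_succ_apply]

lemma natFloor_eq_and_gaussMap_mem_iff {y : ℝ} (hy : 0 ≤ y) {I : Set ℝ} (hI : I ⊆ Ioo 0 1)
    (a : ℕ) : ⌊1 / y⌋₊ = a ∧ gaussMap y ∈ I ↔ 1 / y - a ∈ I := by
  have hgauss : ⌊1 / y⌋₊ = a → gaussMap y = 1 / y - a := by
    rintro rfl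
    exact eq_sub_of_add_eq' (natFloor_add_gaussMap hy)
  refine ⟨fun ⟨ha, hmem⟩ => hgauss ha ▸ hmem, fun hmem => ?_⟩
  have ha : ⌊1 / y⌋₊ = a := by
    obtain ⟨h₀, h₁⟩ := hI hmem
    exact (Nat.floor_eq_iff (by positivity)).2 ⟨by linarith, by linarith⟩
  exact ⟨ha, (hgauss ha).symm ▸ hmem⟩

lemma exists_ordConnected_mem_iff_pq_eq (n : ℕ) (b : ℕ → ℕ) :
    ∃ I ⊆ Ioo (0 : ℝ) 1, I.OrdConnected ∧
      ∀ y ∈ unitIrrationals, y ∈ I ↔ ∀ k < n, pq y (k + 1) = b (k + 1) := by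
  induction n generalizing b with
  | zero => exact ⟨Ioo 0 1, Subset.rfl, ordConnected_Ioo, fun y hy => by simpa using hy.1⟩
  | succ n ih =>
    obtain ⟨I, hsub, hI, hmem⟩ := ih fun k => b (k + 1)
    refine ⟨{y ∈ Ioo 0 1 | 1 / y - b 1 ∈ I}, sep_subset _ _, ⟨?_⟩, fun y hy => ?_⟩
    · rintro u ⟨hu, huI⟩ v ⟨hv, hvI⟩ y ⟨huy, hyv⟩
      have hy₀ : 0 < y := hu.1.trans_le huy
      exact ⟨⟨hy₀, hyv.trans_lt hv.2⟩, hI.out hvI huI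
        ⟨sub_le_sub_right (one_div_le_one_div_of_le hy₀ hyv) _,
          sub_le_sub_right (one_div_le_one_div_of_le hu.1 huy) _⟩⟩
    · rw [mem_ofPred_eq, and_iff_right hy.1, ← natFloor_eq_and_gaussMap_mem_iff hy.1.1.le hsub,
        hmem _ (gaussMap_mem hy), Nat.forall_lt_succ_left]
      simp only [pq_add_two]
      rfl

lemma exists_cylinder_eq_Dset_inter_prod (n : ℕ) (b : ℤ → ℕ) :
    ∃ J I : Set ℝ, I.OrdConnected ∧ _root_.cylinder n b = Dset ∩ J ×ˢ I := by
  obtain ⟨I, -, hI, hmem⟩ := exists_ordConnected_mem_iff_pq_eq n fun k => b k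
  refine ⟨{x | ∀ j : ℕ, j ≤ n → pq x (j + 1) = b (-(j : ℤ))}, I, hI, ?_⟩
  ext p
  refine and_congr_right fun hp => ?_
  have hshift : (∀ k : ℕ, 1 ≤ k → k ≤ n → pq p.2 k = b k) ↔
      ∀ k < n, pq p.2 (k + 1) = b (k + 1 : ℕ) :=
    ⟨fun h k hk => h _ k.succ_pos hk, fun h k hk hkn => by
      obtain ⟨j, rfl⟩ := Nat.exists_eq_add_of_le' hk
      exact h j hkn⟩
  rw [mem_prod, hmem _ (snd_mem_of_mem_Dset hp), hshift, and_comm]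
  rfl

/-! ### The measure estimate -/

lemma exp_mul_two_mul_exp_sub_one_lt {ε : ℝ} (hε : 0 < ε) (hε' : ε < 1 / 7) :
    Real.exp (2 * ε) * (2 * (Real.exp (3 / 2 * ε) - 1)) < 7 * ε := by
  have h₁ : Real.exp (3 / 2 * ε) ≤ 1 / (1 - 3 / 2 * ε) :=
    Real.exp_bound_div_one_sub_of_interval (by positivity) (by linarith)
  have h₂ : Real.exp (2 * ε) ≤ 1 / (1 - 2 * ε) :=
    Real.exp_bound_div_one_sub_of_interval (by positivity) (by linarith)
  have hd₁ : 0 < 1 - 3 / 2 * ε := by linarith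
  have hd₂ : 0 < 1 - 2 * ε := by linarith
  have hexp : 0 ≤ Real.exp (3 / 2 * ε) - 1 := sub_nonneg.2 (Real.one_le_exp (by positivity))
  calc Real.exp (2 * ε) * (2 * (Real.exp (3 / 2 * ε) - 1))
      ≤ 1 / (1 - 2 * ε) * (2 * (1 / (1 - 3 / 2 * ε) - 1)) := by gcongr
    _ = 3 * ε / ((1 - 2 * ε) * (1 - 3 / 2 * ε)) := by
      rw [div_sub_one hd₁.ne', ← div_div]
      ring
    _ < 7 * ε := by
      rw [div_lt_iff₀ (mul_pos hd₂ hd₁)]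
      nlinarith [mul_pos hε hε]

lemma eventually_volume_nIndex_ne_rTime_le {J I : Set ℝ} (hI : I.OrdConnected) {c ε κ : ℝ}
    (hε : 0 < ε) (hlog : ∀ p ∈ Dset ∩ J ×ˢ I, |Real.log (1 + p.1 * p.2) + c| ≤ ε / 2)
    (hκ : 2 * (Real.exp (3 / 2 * ε) - 1) < κ) :
    ∀ᶠ R in atTop, volume {p ∈ Dset ∩ J ×ˢ I | nIndex p.2 R ≠ rTime p (Real.log R - c)} ≤
      ENNReal.ofReal κ * volume (Dset ∩ J ×ˢ I) := by
  have hratio : Real.exp (3 / 4 * ε) / Real.exp (-(3 / 4 * ε)) = Real.exp (3 / 2 * ε) := by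
    rw [← Real.exp_sub]
    ring_nf
  have hvol := eventually_volume_inter_approximable_le (hI.inter ordConnected_Ioo)
    ((Metric.isBounded_Ioo (0 : ℝ) 1).subset inter_subset_right)
    (Real.exp_pos (-(3 / 4 * ε))) (Real.exp_le_exp.2 (by linarith)) (hratio ▸ hκ)
  have hlarge : ∀ᶠ R in atTop, 16 * Real.exp ε ≤ ε * R ^ 2 :=
    ((tendsto_pow_atTop two_ne_zero).const_mul_atTop hε).eventually_ge_atTop _
  filter_upwards [hvol, hlarge, eventually_gt_atTop 0] with R hR hRε hR₀
  set W := approximable (Real.exp (-(3 / 4 * ε)) * R) (Real.exp (3 / 4 * ε) * R)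
  have hsub : {p ∈ Dset ∩ J ×ˢ I | nIndex p.2 R ≠ rTime p (Real.log R - c)} ⊆
      Dset ∩ J ×ˢ (I ∩ W) := fun p ⟨⟨hp, hpJ, hpI⟩, hne⟩ =>
    ⟨hp, hpJ, hpI, snd_mem_approximable hp hR₀ hRε (hlog p ⟨hp, hpJ, hpI⟩) hne⟩
  calc _ ≤ volume (Dset ∩ J ×ˢ (I ∩ W)) := measure_mono hsub
    _ = volume (J ∩ Ioo 0 1) * volume (I ∩ Ioo 0 1 ∩ W) := by
      rw [volume_Dset_inter_prod, inter_right_comm]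
    _ ≤ volume (J ∩ Ioo 0 1) * (ENNReal.ofReal κ * volume (I ∩ Ioo 0 1)) := by gcongr
    _ = ENNReal.ofReal κ * volume (Dset ∩ J ×ˢ I) := by
      rw [volume_Dset_inter_prod, mul_left_comm]

theorem statement11_general (f : ℝ × ℝ → ℝ) (ε : ℝ) (hε : 0 < ε) (J I : Set ℝ)
    (hI : I.OrdConnected)
    (hf : ∀ p ∈ Dset ∩ J ×ˢ I,
      Tendsto (fun n => Real.log (qden (pq p.2) n : ℝ) - birk p n) atTop (𝓝 (f p)))
    (c : ℝ) (hc : ∀ p ∈ Dset ∩ J ×ˢ I, |f p - c| ≤ ε / 2) :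
    ∃ R₀ > (0 : ℝ), ∀ R : ℝ, R₀ ≤ R →
      mu2 {p ∈ Dset ∩ J ×ˢ I | nIndex p.2 R ≠ rTime p (Real.log R - c)} ≤
        ENNReal.ofReal (7 * ε) * mu2 (Dset ∩ J ×ˢ I) := by
  rcases le_or_gt (1 / 7) ε with hlarge | hsmall
  · have hone_le : 1 ≤ ENNReal.ofReal (7 * ε) := ENNReal.one_le_ofReal.2 (by linarith)
    exact ⟨1, one_pos, fun R _ =>
      (measure_mono (sep_subset _ _)).trans (le_mul_of_one_le_left zero_le hone_le)⟩
  have hlog : ∀ p ∈ Dset ∩ J ×ˢ I, |Real.log (1 + p.1 * p.2) + c| ≤ ε / 2 := fun p hp => by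
    have hfp := tendsto_nhds_unique (hf p hp) (tendsto_log_qden_sub_birk hp.1)
    rw [← abs_neg, neg_add', ← hfp]
    exact hc p hp
  have hκ : 2 * (Real.exp (3 / 2 * ε) - 1) < 7 * ε / Real.exp (2 * ε) :=
    (lt_div_iff₀' (Real.exp_pos _)).2 (exp_mul_two_mul_exp_sub_one_lt hε hsmall)
  obtain ⟨R₀, hR₀⟩ := eventually_atTop.1 (eventually_volume_nIndex_ne_rTime_le hI hε hlog hκ)
  refine ⟨max R₀ 1, by positivity, fun R hR => ?_⟩
  have hmu := mu2_le_of_volume_le (sep_subset _ _) inter_subset_left hlog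
    (hR₀ R ((le_max_left _ _).trans hR))
  rwa [show 4 * (ε / 2) = 2 * ε by ring, mul_div_cancel₀ _ (Real.exp_ne_zero _)] at hmu

/-- Let `f` be the limit of the functions `f_n = ln qₙ − Sₙφ` on `D`. Let
`ε > 0` and let `C` be a bi-sided cylinder of length `n` with `|f − f_C| ≤ ε/2` on `C`, where
`f_C = sup_C f`. Then there is `R₀ > 0` such that for all `R ≥ R₀`, setting `T = ln R − f_C`,
the set `U = {α̂ ∈ C : n_R(α̂) ≠ r(α̂, T)}` satisfies `μ₂(U ∩ C) ≤ 7ε·μ₂(C)`. -/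
theorem statement11 (f : ℝ × ℝ → ℝ)
    (hf : ∀ p ∈ Dset,
      Filter.Tendsto (fun n => Real.log (qden (pq p.2) n : ℝ) - birk p n)
        Filter.atTop (nhds (f p)))
    (ε : ℝ) (hε : 0 < ε) (n : ℕ) (b : ℤ → ℕ)
    (hb : ∀ m : ℤ, -(n : ℤ) ≤ m → m ≤ (n : ℤ) → 0 < b m)
    (fC : ℝ) (hfC : fC = sSup (f '' cylinder n b))
    (hvar : ∀ p ∈ cylinder n b, |f p - fC| ≤ ε / 2) :
    ∃ R₀ > (0 : ℝ), ∀ R : ℝ, R₀ ≤ R →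
      mu2 {p ∈ cylinder n b | nIndex p.2 R ≠ rTime p (Real.log R - fC)} ≤
        ENNReal.ofReal (7 * ε) * mu2 (cylinder n b) := by
  obtain ⟨J, I, hI, hC⟩ := exists_cylinder_eq_Dset_inter_prod n b
  rw [hC] at hvar ⊢
  exact statement11_general f ε hε J I hI (fun p hp => hf p hp.1) fC hvar
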